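/- arXiv:1706.03707 — 4 statements merged into one kernel-verified Lean document; each statement's English description precedes it below -/
import Mathlib

section
/- Let X be a nonempty convex subset of ℝⁿ and let F : X → ℝⁿ be continuous and strictly pseudomonotone on X. Then a point x* ∈ X is a solution of the variational inequality VI(F, X) if and only if it is a solution of the dual variational inequality VID(F, X). -/
open scoped RealInnerProductSpace

/-!
Pseudomonotonicity applied to the pair `(x, y)` turns the primal inequality at `y` into the dual
one. Conversely (Minty), test the dual inequality at `x + t • (y - x)`, divide by `t > 0`, and let
`t → 0⁺`.
-/

open Filter Set Topology

section VariationalInequality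

variable {E : Type*} [AddCommGroup E] [Module ℝ E]

/-- `x` is a solution of the (primal, or Stampacchia) variational inequality VI(F, X). The operator
takes values in the algebraic dual, so that no inner product or topology on `E` is required. -/
def SolvesVI (F : E → Module.Dual ℝ E) (X : Set E) (x : E) : Prop :=
  x ∈ X ∧ ∀ y ∈ X, 0 ≤ F x (y - x)

/-- `x` is a solution of the dual (or Minty) variational inequality VID(F, X). -/
def SolvesDualVI (F : E → Module.Dual ℝ E) (X : Set E) (x : E) : Prop :=
  x ∈ X ∧ ∀ y ∈ X, 0 ≤ F y (y - x)

/-- Pseudomonotonicity in the sense of Karamardian: the property that carries solutions of the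
primal variational inequality to solutions of the dual one. -/
def PseudomonotoneOn (F : E → Module.Dual ℝ E) (X : Set E) : Prop :=
  ∀ x ∈ X, ∀ y ∈ X, 0 ≤ F x (y - x) → 0 ≤ F y (y - x)

/-- Strict pseudomonotonicity: pseudomonotonicity with a strict conclusion at distinct points. -/
def StrictlyPseudomonotoneOn (F : E → Module.Dual ℝ E) (X : Set E) : Prop :=
  ∀ x ∈ X, ∀ y ∈ X, x ≠ y → 0 ≤ F x (y - x) → 0 < F y (y - x)

/-- Radial continuity (hemicontinuity) of `F` at `x` relative to `X`: one-sided continuity along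
each segment from `x` to a point of `X`, tested only against the direction of that segment. It is
the regularity under which the dual variational inequality implies the primal one. -/
def RadiallyContinuousWithinAt (F : E → Module.Dual ℝ E) (X : Set E) (x : E) : Prop :=
  ∀ y ∈ X, Tendsto (fun t : ℝ => F (x + t • (y - x)) (y - x)) (𝓝[>] 0) (𝓝 (F x (y - x)))

variable {F : E → Module.Dual ℝ E} {X : Set E} {x : E}

theorem StrictlyPseudomonotoneOn.pseudomonotoneOn (hF : StrictlyPseudomonotoneOn F X) :
    PseudomonotoneOn F X := by
  intro x hx y hy hxy
  rcases eq_or_ne x y with rfl | hne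
  · exact hxy
  · exact (hF x hx y hy hne hxy).le

theorem SolvesVI.solvesDualVI (h : SolvesVI F X x) (hF : PseudomonotoneOn F X) :
    SolvesDualVI F X x :=
  ⟨h.1, fun y hy => hF x h.1 y hy (h.2 y hy)⟩

theorem SolvesDualVI.apply_add_smul_sub_nonneg (h : SolvesDualVI F X x) (hX : StarConvex ℝ x X)
    {y : E} (hy : y ∈ X) {t : ℝ} (ht : t ∈ Ioc (0 : ℝ) 1) :
    0 ≤ F (x + t • (y - x)) (y - x) := by
  have hdual : 0 ≤ F (x + t • (y - x)) (x + t • (y - x) - x) :=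
    h.2 _ (hX.add_smul_sub_mem hy ht.1.le ht.2)
  rw [add_sub_cancel_left, map_smul, smul_eq_mul] at hdual
  exact nonneg_of_mul_nonneg_right hdual ht.1

theorem SolvesDualVI.solvesVI (h : SolvesDualVI F X x) (hX : StarConvex ℝ x X)
    (hF : RadiallyContinuousWithinAt F X x) : SolvesVI F X x := by
  refine ⟨h.1, fun y hy => ge_of_tendsto (hF y hy) ?_⟩
  filter_upwards [Ioc_mem_nhdsGT one_pos] with t ht
  exact h.apply_add_smul_sub_nonneg hX hy ht

end VariationalInequality

section RadialContinuity

variable {E : Type*} [AddCommGroup E] [Module ℝ E] [TopologicalSpace E] [ContinuousAdd E]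
  [ContinuousSMul ℝ E] {X : Set E} {x y : E}

theorem tendsto_add_smul_sub_nhdsWithin_of_starConvex (hX : StarConvex ℝ x X) (hy : y ∈ X) :
    Tendsto (fun t : ℝ => x + t • (y - x)) (𝓝[>] 0) (𝓝[X] x) := by
  refine tendsto_nhdsWithin_iff.2 ⟨?_, ?_⟩
  · have hcont : Continuous fun t : ℝ => x + t • (y - x) := by fun_prop
    exact (hcont.tendsto' 0 x (by simp)).mono_left nhdsWithin_le_nhds
  · filter_upwards [Ioc_mem_nhdsGT one_pos] with t ht
    exact hX.add_smul_sub_mem hy ht.1.le ht.2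

theorem radiallyContinuousWithinAt_of_continuousWithinAt_apply {F : E → Module.Dual ℝ E}
    (hX : StarConvex ℝ x X) (hF : ∀ v, ContinuousWithinAt (fun z => F z v) X x) :
    RadiallyContinuousWithinAt F X x := fun y hy =>
  (hF (y - x)).tendsto.comp (tendsto_add_smul_sub_nhdsWithin_of_starConvex hX hy)

end RadialContinuity

theorem primal_iff_dual_of_strictly_pseudomonotone_general {E : Type*} [AddCommGroup E]
    [Module ℝ E] {F : E → Module.Dual ℝ E} {X : Set E} {x : E} (hX : StarConvex ℝ x X)
    (hcont : RadiallyContinuousWithinAt F X x) (hF : PseudomonotoneOn F X) :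
    SolvesVI F X x ↔ SolvesDualVI F X x :=
  ⟨fun h => h.solvesDualVI hF, fun h => h.solvesVI hX hcont⟩

/-- For a continuous, strictly pseudomonotone `F` on a nonempty convex set `X`,
`x*` solves VI(F, X) iff it solves the dual variational inequality VID(F, X). -/
theorem primal_iff_dual_of_strictly_pseudomonotone {n : ℕ}
    (X : Set (EuclideanSpace ℝ (Fin n))) (hne : X.Nonempty) (hconv : Convex ℝ X)
    (F : EuclideanSpace ℝ (Fin n) → EuclideanSpace ℝ (Fin n))
    (hF : ContinuousOn F X)
    (hstrict : ∀ x ∈ X, ∀ y ∈ X, x ≠ y → ⟪F x, y - x⟫ ≥ 0 → ⟪F y, y - x⟫ > 0)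
    (xstar : EuclideanSpace ℝ (Fin n)) (hxstar : xstar ∈ X) :
    (∀ x ∈ X, ⟪F xstar, x - xstar⟫ ≥ 0) ↔ (∀ x ∈ X, ⟪F x, x - xstar⟫ ≥ 0) := by
  have hX : StarConvex ℝ xstar X := hconv.starConvex hxstar
  have hcont : RadiallyContinuousWithinAt (fun x => innerₗ _ (F x)) X xstar :=
    radiallyContinuousWithinAt_of_continuousWithinAt_apply hX fun _ =>
      (hF xstar hxstar).inner continuousWithinAt_const
  have hpseudo : PseudomonotoneOn (fun x => innerₗ _ (F x)) X :=
    StrictlyPseudomonotoneOn.pseudomonotoneOn hstrict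
  exact and_congr_right_iff.1
    (primal_iff_dual_of_strictly_pseudomonotone_general hX hcont hpseudo) hxstar
end

section
/- A set P ⊆ ℝⁿ is a polytope (the convex hull of a finite set of points) if and only if it is a bounded polyhedron (a bounded set of the form {x ∈ ℝⁿ : Ax ≤ b} for some m×n real matrix A and vector b ∈ ℝᵐ). -/
/-!
A polyhedron has finitely many extreme points, since an extreme point is determined by the
constraints that are tight at it; so by Krein–Milman a compact polyhedron is the convex hull of a
finite set.

The converse follows by applying this in the space of affine inequalities `f x ≤ c`, whose elements
are the pairs `(f, c)`. The inequalities valid on a finite set `S` form a polyhedral cone there, and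
by Hahn–Banach they cut out the convex hull of `S`. Truncating the cone to a compact polyhedral
neighbourhood of `0` loses nothing, as inequalities may be rescaled. The truncated cone is the
convex hull of finitely many inequalities, and these alone already cut out the convex hull of `S`.
-/

open Filter Set
open scoped Topology

/-- A polytope, presented as the convex hull of finitely many points. -/
def IsPolytope {E : Type*} [AddCommGroup E] [Module ℝ E] (P : Set E) : Prop :=
  ∃ S : Finset E, P = convexHull ℝ (S : Set E)

section Defs

variable {E : Type*} [AddCommGroup E] [Module ℝ E] [TopologicalSpace E]

/-- The points satisfying all the inequalities `f x ≤ c`, `(f, c) ∈ T`: an affine inequality is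
encoded as the pair of its linear part and its right-hand side. -/
def solutionSet (T : Set (StrongDual ℝ E × ℝ)) : Set E :=
  {x | ∀ p ∈ T, p.1 x ≤ p.2}

/-- The affine inequalities `f x ≤ c`, encoded as pairs `(f, c)`, that hold at every point of `S`.
Together with `solutionSet` it forms the Galois connection between points and inequalities. -/
def validIneqs (S : Set E) : Set (StrongDual ℝ E × ℝ) :=
  {p | ∀ x ∈ S, p.1 x ≤ p.2}

/-- A polyhedron, presented as the solution set of finitely many continuous affine inequalities. -/
def IsPolyhedron (P : Set E) : Prop :=
  ∃ T : Finset (StrongDual ℝ E × ℝ), P = solutionSet (T : Set (StrongDual ℝ E × ℝ))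

end Defs

section SolutionSet

variable {E : Type*} [AddCommGroup E] [Module ℝ E] [TopologicalSpace E]
  {S : Set E} {T T' : Set (StrongDual ℝ E × ℝ)}

theorem subset_validIneqs_iff_subset_solutionSet : T ⊆ validIneqs S ↔ S ⊆ solutionSet T :=
  ⟨fun h x hx _ hp ↦ h hp x hx, fun h p hp _ hx ↦ h hx p hp⟩

theorem solutionSet_anti (h : T ⊆ T') : solutionSet T' ⊆ solutionSet T :=
  fun _ hx p hp ↦ hx p (h hp)

theorem solutionSet_union : solutionSet (T ∪ T') = solutionSet T ∩ solutionSet T' := by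
  ext x
  simp only [solutionSet, mem_union, or_imp, forall_and, mem_inter_iff, mem_ofPred_eq]

theorem solutionSet_eq_biInter : solutionSet T = ⋂ p ∈ T, {x | p.1 x ≤ p.2} := by
  ext x
  simp only [solutionSet, mem_iInter, mem_ofPred_eq]

theorem convex_solutionSet : Convex ℝ (solutionSet T) := by
  rw [solutionSet_eq_biInter]
  exact convex_iInter₂ fun p _ ↦ convex_halfSpace_le p.1.toLinearMap.isLinear p.2

theorem isClosed_solutionSet : IsClosed (solutionSet T) := by
  rw [solutionSet_eq_biInter]
  exact isClosed_biInter fun p _ ↦ isClosed_le p.1.continuous continuous_const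

theorem smul_mem_validIneqs {p : StrongDual ℝ E × ℝ} (hp : p ∈ validIneqs S) {c : ℝ} (hc : 0 ≤ c) :
    c • p ∈ validIneqs S :=
  fun x hx ↦ mul_le_mul_of_nonneg_left (hp x hx) hc

theorem solutionSet_validIneqs [IsTopologicalAddGroup E] [ContinuousSMul ℝ E]
    [LocallyConvexSpace ℝ E] (S : Set E) :
    solutionSet (validIneqs S) = closure (convexHull ℝ S) := by
  refine Subset.antisymm (fun x hx ↦ ?_) <|
    closure_minimal (convexHull_min ?_ convex_solutionSet) isClosed_solutionSet
  · by_contra hxS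
    obtain ⟨f, c, hf, hcx⟩ :=
      geometric_hahn_banach_closed_point (convex_convexHull ℝ S).closure isClosed_closure hxS
    have hvalid : (f, c) ∈ validIneqs S :=
      fun s hs ↦ (hf s (subset_closure (subset_convexHull ℝ S hs))).le
    exact hcx.not_ge (hx _ hvalid)
  · exact subset_validIneqs_iff_subset_solutionSet.1 Subset.rfl

theorem solutionSet_validIneqs_inter (S : Set E) {K : Set (StrongDual ℝ E × ℝ)} (hK : K ∈ 𝓝 0) :
    solutionSet (validIneqs S ∩ K) = solutionSet (validIneqs S) := by
  refine Subset.antisymm (fun x hx p hp ↦ ?_) (solutionSet_anti inter_subset_left)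
  have hscale : Tendsto (fun c : ℝ ↦ c • p) (𝓝[>] 0) (𝓝 0) := by
    have hcont : Continuous fun c : ℝ ↦ c • p := by fun_prop
    simpa using (hcont.tendsto 0).mono_left nhdsWithin_le_nhds
  obtain ⟨c, hcK, hc : 0 < c⟩ := ((hscale.eventually_mem hK).and self_mem_nhdsWithin).exists
  exact le_of_mul_le_mul_left (hx (c • p) ⟨smul_mem_validIneqs hp hc.le, hcK⟩) hc

end SolutionSet

section ExtremePoints

theorem mem_openSegment_sub_smul {𝕜 E : Type*} [Field 𝕜] [LinearOrder 𝕜] [IsStrictOrderedRing 𝕜]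
    [AddCommGroup E] [Module 𝕜 E] (x y : E) {ε : 𝕜} (hε : 0 < ε) :
    x ∈ openSegment 𝕜 y (x - ε • (y - x)) := by
  refine ⟨ε / (1 + ε), 1 / (1 + ε), by positivity, by positivity, by field_simp; ring, ?_⟩
  match_scalars <;> field_simp <;> ring

variable {E : Type*} [AddCommGroup E] [Module ℝ E] [TopologicalSpace E]
  {T : Set (StrongDual ℝ E × ℝ)} {x y : E}

theorem eventually_sub_smul_mem_solutionSet (hT : T.Finite) (hx : x ∈ solutionSet T)
    (htight : ∀ p ∈ T, p.1 x = p.2 → p.1 y = p.2) :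
    ∀ᶠ ε : ℝ in 𝓝 0, x - ε • (y - x) ∈ solutionSet T := by
  refine (eventually_all_finite hT).2 fun p hp ↦ ?_
  rcases (hx p hp).eq_or_lt with heq | hlt
  · refine .of_forall fun ε ↦ ?_
    simp only [map_sub, map_smul, htight p hp heq, heq, sub_self, smul_zero, sub_zero, le_refl]
  · have hcont : Continuous fun ε : ℝ ↦ p.1 (x - ε • (y - x)) := by
      simp only [map_sub, map_smul]
      fun_prop
    have hzero : p.1 (x - (0 : ℝ) • (y - x)) < p.2 := by simpa using hlt
    exact (hcont.continuousAt.eventually_lt_const hzero).mono fun _ ↦ le_of_lt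

theorem eq_of_mem_extremePoints_solutionSet (hT : T.Finite)
    (hx : x ∈ (solutionSet T).extremePoints ℝ) (hy : y ∈ solutionSet T)
    (htight : ∀ p ∈ T, p.1 x = p.2 → p.1 y = p.2) : y = x := by
  have hmem : ∀ᶠ ε : ℝ in 𝓝[>] 0, x - ε • (y - x) ∈ solutionSet T :=
    (eventually_sub_smul_mem_solutionSet hT hx.1 htight).filter_mono nhdsWithin_le_nhds
  obtain ⟨ε, hmem, hε⟩ := (hmem.and self_mem_nhdsWithin).exists
  exact hx.2 hy hmem (mem_openSegment_sub_smul x y hε)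

theorem finite_extremePoints_solutionSet (hT : T.Finite) :
    ((solutionSet T).extremePoints ℝ).Finite := by
  let tight (x : E) : Set (StrongDual ℝ E × ℝ) := {p ∈ T | p.1 x = p.2}
  have htight : MapsTo tight ((solutionSet T).extremePoints ℝ) (𝒫 T) := fun _ _ _ hp ↦ hp.1
  refine Finite.of_injOn htight (fun x hx y hy hxy ↦ ?_) hT.finite_subsets
  refine (eq_of_mem_extremePoints_solutionSet hT hx hy.1 fun p hp hpx ↦ ?_).symm
  exact (hxy.subset (show p ∈ tight x from ⟨hp, hpx⟩)).2

end ExtremePoints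

namespace IsPolyhedron

variable {E : Type*} [AddCommGroup E] [Module ℝ E] [TopologicalSpace E] {P Q : Set E}

protected theorem convex (hP : IsPolyhedron P) : Convex ℝ P := by
  obtain ⟨T, rfl⟩ := hP
  exact convex_solutionSet

protected theorem isClosed (hP : IsPolyhedron P) : IsClosed P := by
  obtain ⟨T, rfl⟩ := hP
  exact isClosed_solutionSet

theorem finite_extremePoints (hP : IsPolyhedron P) : (P.extremePoints ℝ).Finite := by
  obtain ⟨T, rfl⟩ := hP
  exact finite_extremePoints_solutionSet T.finite_toSet

protected theorem inter (hP : IsPolyhedron P) (hQ : IsPolyhedron Q) : IsPolyhedron (P ∩ Q) := by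
  classical
  obtain ⟨T, rfl⟩ := hP
  obtain ⟨T', rfl⟩ := hQ
  exact ⟨T ∪ T', by rw [Finset.coe_union, solutionSet_union]⟩

theorem setOf_forall_le {ι : Type*} [Finite ι] (f : ι → StrongDual ℝ E) (b : ι → ℝ) :
    IsPolyhedron {x | ∀ i, f i x ≤ b i} := by
  refine ⟨(finite_range fun i ↦ (f i, b i)).toFinset, ?_⟩
  ext x
  simp only [solutionSet, Finite.coe_toFinset, forall_mem_range, mem_ofPred_eq]

theorem isPolytope_of_isCompact [T2Space E] [IsTopologicalAddGroup E] [ContinuousSMul ℝ E]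
    [LocallyConvexSpace ℝ E] (hP : IsPolyhedron P) (hcompact : IsCompact P) : IsPolytope P := by
  have hfin := hP.finite_extremePoints
  refine ⟨hfin.toFinset, ?_⟩
  rw [hfin.coe_toFinset, ← (hfin.isClosed_convexHull ℝ).closure_eq,
    closure_convexHull_extremePoints hcompact hP.convex]

theorem exists_isCompact_mem_nhds_zero (E : Type*) [AddCommGroup E] [Module ℝ E]
    [TopologicalSpace E] [T2Space E] [IsTopologicalAddGroup E] [ContinuousSMul ℝ E]
    [FiniteDimensional ℝ E] :
    ∃ K : Set E, IsPolyhedron K ∧ IsCompact K ∧ K ∈ 𝓝 0 := by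
  let e : E ≃L[ℝ] (Fin (Module.finrank ℝ E) → ℝ) := .ofFinrankEq (by simp)
  let coord (i : Fin (Module.finrank ℝ E)) : StrongDual ℝ E :=
    (ContinuousLinearMap.proj (φ := fun _ ↦ ℝ) i).comp e.toContinuousLinearMap
  have hbox : e ⁻¹' Icc (-1) 1 =
      {x | ∀ i, (-coord i) x ≤ 1} ∩ {x | ∀ i, coord i x ≤ 1} := by
    ext x
    simp [coord, Pi.le_def, neg_le]
  refine ⟨e ⁻¹' Icc (-1) 1, ?_, ?_, ?_⟩
  · rw [hbox]
    exact (setOf_forall_le _ _).inter (setOf_forall_le _ _)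
  · exact e.toHomeomorph.isCompact_preimage.2 isCompact_Icc
  · refine e.continuous.continuousAt.preimage_mem_nhds ?_
    rw [map_zero]
    exact pi_Icc_mem_nhds (fun _ ↦ by simp) (fun _ ↦ by simp)

end IsPolyhedron

section Duality

variable {E : Type*} [AddCommGroup E] [Module ℝ E] [TopologicalSpace E] [ContinuousSMul ℝ E]

/-- The amount `f x - c` by which `x` violates the inequality `(f, c)`, as a linear function of the
inequality. It turns points into constraints on inequalities. -/
def violation (x : E) : StrongDual ℝ (StrongDual ℝ E × ℝ) where
  toFun p := p.1 x - p.2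
  map_add' p q := add_sub_add_comm (p.1 x) (q.1 x) p.2 q.2
  map_smul' c p := (mul_sub c (p.1 x) p.2).symm

theorem validIneqs_eq_solutionSet (S : Set E) :
    validIneqs S = solutionSet ((fun x ↦ (violation x, (0 : ℝ))) '' S) := by
  ext p
  simp [validIneqs, solutionSet, violation]

theorem convex_validIneqs (S : Set E) : Convex ℝ (validIneqs S) :=
  validIneqs_eq_solutionSet S ▸ convex_solutionSet

theorem isPolyhedron_validIneqs (S : Finset E) : IsPolyhedron (validIneqs (S : Set E)) := by
  classical
  exact ⟨S.image fun x ↦ (violation x, 0), by rw [Finset.coe_image, validIneqs_eq_solutionSet]⟩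

theorem solutionSet_convexHull (T : Set (StrongDual ℝ E × ℝ)) :
    solutionSet (convexHull ℝ T) = solutionSet T :=
  (solutionSet_anti (subset_convexHull ℝ T)).antisymm <|
    subset_validIneqs_iff_subset_solutionSet.1 <|
      convexHull_min (subset_validIneqs_iff_subset_solutionSet.2 Subset.rfl) (convex_validIneqs _)

theorem IsPolytope.isPolyhedron [T2Space E] [IsTopologicalAddGroup E] [LocallyConvexSpace ℝ E]
    [FiniteDimensional ℝ E] {P : Set E} (hP : IsPolytope P) : IsPolyhedron P := by
  obtain ⟨S, rfl⟩ := hP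
  obtain ⟨K, hK, hKcompact, hKnhds⟩ :=
    IsPolyhedron.exists_isCompact_mem_nhds_zero (StrongDual ℝ E × ℝ)
  have hV := isPolyhedron_validIneqs S
  obtain ⟨T, hT⟩ := (hV.inter hK).isPolytope_of_isCompact (hKcompact.inter_left hV.isClosed)
  refine ⟨T, ?_⟩
  calc convexHull ℝ (S : Set E)
      = solutionSet (validIneqs S) := by
        rw [solutionSet_validIneqs, (S.finite_toSet.isClosed_convexHull ℝ).closure_eq]
    _ = solutionSet (validIneqs S ∩ K) := (solutionSet_validIneqs_inter _ hKnhds).symm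
    _ = solutionSet T := by rw [hT, solutionSet_convexHull]

end Duality

theorem polytope_iff_bounded_polyhedron_general {E : Type*} [NormedAddCommGroup E]
    [NormedSpace ℝ E] [FiniteDimensional ℝ E] {P : Set E} :
    IsPolytope P ↔ Bornology.IsBounded P ∧ IsPolyhedron P := by
  refine ⟨fun hP ↦ ⟨?_, hP.isPolyhedron⟩, fun ⟨hbounded, hP⟩ ↦ hP.isPolytope_of_isCompact ?_⟩
  · obtain ⟨S, rfl⟩ := hP
    exact isBounded_convexHull.2 S.finite_toSet.isBounded
  · have : ProperSpace E := FiniteDimensional.proper ℝ E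
    exact Metric.isCompact_of_isClosed_isBounded hP.isClosed hbounded

theorem isPolyhedron_iff_exists_mulVec_le {ι : Type*} [Fintype ι] {P : Set (ι → ℝ)} :
    IsPolyhedron P ↔ ∃ (m : ℕ) (A : Matrix (Fin m) ι ℝ) (b : Fin m → ℝ),
      P = {x | ∀ i, A.mulVec x i ≤ b i} := by
  classical
  constructor
  · rintro ⟨T, rfl⟩
    let ineq (i : Fin T.card) : StrongDual ℝ (ι → ℝ) × ℝ := T.equivFin.symm i
    refine ⟨T.card, LinearMap.toMatrix' (.pi fun i ↦ (ineq i).1), fun i ↦ (ineq i).2, ?_⟩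
    ext x
    simp [solutionSet, ineq, LinearMap.toMatrix'_mulVec, T.equivFin.symm.forall_congr_left]
  · rintro ⟨m, A, b, rfl⟩
    exact .setOf_forall_le
      (fun i ↦ ((LinearMap.proj i).comp A.mulVecLin).toContinuousLinearMap) b

/-- Minkowski–Weyl: a set `P ⊆ ℝⁿ` is a polytope (convex hull of a finite set)
iff it is a bounded polyhedron (a bounded set `{x : A *ᵥ x ≤ b}`). -/
theorem polytope_iff_bounded_polyhedron {n : ℕ} (P : Set (Fin n → ℝ)) :
    (∃ S : Finset (Fin n → ℝ), P = convexHull ℝ (S : Set (Fin n → ℝ))) ↔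
    (Bornology.IsBounded P ∧
      ∃ (m : ℕ) (A : Matrix (Fin m) (Fin n) ℝ) (b : Fin m → ℝ),
        P = {x : Fin n → ℝ | ∀ i, A.mulVec x i ≤ b i}) := by
  rw [← isPolyhedron_iff_exists_mulVec_le]
  exact polytope_iff_bounded_polyhedron_general
end

section
/- Let X ⊆ ℝⁿ be a compact convex body (a compact convex set with nonempty interior) and let F : X → ℝⁿ be a continuous function. Then the variational inequality VI(F, X) has at least one solution, i.e. there exists x* ∈ X with F(x*)ᵀ(x − x*) ≥ 0 for all x ∈ X. -/
open scoped RealInnerProductSpace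

/-!
With `P` the metric projection onto `X`, a fixed point `y` of the bounded map
`x ↦ P x - F (P x)` satisfies `y - P y = -F (P y)`, so the obtuse-angle characterisation of `P y`
is exactly the variational inequality at `P y`. A fixed point exists by Brouwer's theorem, in the
form that a compactly supported continuous self-map has a fixed point, proved following Milnor and
Rogers. If a `C¹` map `g` supported in a ball `B` had no fixed point, then normalising `x - g x`
would give a `C¹` retraction `r` of `B` onto its boundary. For small `t > 0`, the map
`id + t • (r - id)` is injective, maps `B` onto itself and has positive Jacobian determinant, so
`∫ x in B, det (1 + t • (Dr x - 1))` is the volume of `B`. This integral is polynomial in `t`, so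
it is the volume of `B` at `t = 1` as well; but `det (Dr x) = 0`, since `‖r‖` is constant.
-/

open MeasureTheory Metric Set Function
open scoped NNReal Topology

section Determinant

lemma exists_polynomial_eval_eq_det_one_add_smul {𝕜 V : Type*} [Field 𝕜] [AddCommGroup V]
    [Module 𝕜 V] [FiniteDimensional 𝕜 V] (A : V →ₗ[𝕜] V) :
    ∃ p : Polynomial 𝕜, p.natDegree ≤ Module.finrank 𝕜 V ∧
      ∀ t : 𝕜, p.eval t = LinearMap.det (1 + t • A) := by
  let b := Module.finBasis 𝕜 V
  let M := LinearMap.toMatrix b b A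
  refine ⟨((Polynomial.X : Polynomial 𝕜) • M.map Polynomial.C +
    (1 : Matrix _ _ 𝕜).map Polynomial.C).det, ?_, fun t => ?_⟩
  · simpa using Polynomial.natDegree_det_X_add_C_le M 1
  · have toMatrix_eq : LinearMap.toMatrix b b (1 + t • A) = t • M + 1 := by
      rw [map_add, map_smul, LinearMap.toMatrix_one, add_comm]
    rw [← LinearMap.det_toMatrix b, toMatrix_eq, ← Polynomial.coe_evalRingHom, RingHom.map_det]
    congr 1
    ext i j
    rcases eq_or_ne i j with rfl | hij
    · simp [mul_comm t]
    · simp [hij, mul_comm t]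

variable {E : Type*} [NormedAddCommGroup E] [NormedSpace ℝ E] [FiniteDimensional ℝ E]

lemma det_one_add_ne_zero_of_norm_lt_one {A : E →L[ℝ] E} (hA : ‖A‖ < 1) : (1 + A).det ≠ 0 := by
  have : CompleteSpace E := FiniteDimensional.complete ℝ E
  have unit : IsUnit (1 + A) := by
    simpa using isUnit_one_sub_of_norm_lt_one (x := -A) (by simpa using hA)
  exact (LinearMap.isUnit_det _ (unit.map ContinuousLinearMap.toLinearMapRingHom)).ne_zero

lemma det_one_add_pos_of_norm_lt_one {A : E →L[ℝ] E} (hA : ‖A‖ < 1) : 0 < (1 + A).det := by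
  by_contra! hdet
  have cont : ContinuousOn (fun t : ℝ => (1 + t • A).det) (Icc 0 1) :=
    (ContinuousLinearMap.continuous_det.comp (by fun_prop)).continuousOn
  obtain ⟨t, ht, hzero⟩ := intermediate_value_Icc' zero_le_one cont (show (0 : ℝ) ∈ _ by
    simpa [ContinuousLinearMap.det] using hdet)
  refine det_one_add_ne_zero_of_norm_lt_one (A := t • A) ?_ hzero
  calc ‖t • A‖ = t * ‖A‖ := by rw [norm_smul, Real.norm_of_nonneg ht.1]
    _ ≤ 1 * ‖A‖ := by gcongr; exact ht.2
    _ < 1 := by rwa [one_mul]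

end Determinant

lemma integral_eval_eq_of_forall_mem_finset {α : Type*} [MeasurableSpace α] {μ : Measure α}
    {p : α → Polynomial ℝ} {s : Finset ℝ} {c : ℝ} (hs : s.Nonempty)
    (hdeg : ∀ x, (p x).degree < s.card)
    (hint : ∀ t ∈ s, Integrable (fun x => (p x).eval t) μ)
    (heq : ∀ t ∈ s, ∫ x, (p x).eval t ∂μ = c) (u : ℝ) :
    ∫ x, (p x).eval u ∂μ = c := by
  let w : ℝ → ℝ := fun t => (Lagrange.basis s id t).eval u
  have sum_w : ∑ t ∈ s, w t = 1 := by
    rw [← Polynomial.eval_finsetSum, Lagrange.sum_basis injective_id.injOn hs, Polynomial.eval_one]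
  have interpolation (x : α) : (p x).eval u = ∑ t ∈ s, (p x).eval t * w t := by
    conv_lhs => rw [Lagrange.eq_interpolate injective_id.injOn (hdeg x)]
    simp [Lagrange.interpolate_apply, Polynomial.eval_finsetSum, w]
  calc ∫ x, (p x).eval u ∂μ = ∑ t ∈ s, (∫ x, (p x).eval t ∂μ) * w t := by
        simp_rw [interpolation]
        rw [integral_finsetSum _ fun t ht => (hint t ht).mul_const _]
        simp_rw [integral_mul_const]
    _ = ∑ t ∈ s, c * w t := Finset.sum_congr rfl fun t ht => by rw [heq t ht]
    _ = c := by rw [← Finset.mul_sum, sum_w, mul_one]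

section Perturbation

lemma image_id_add_eq_of_support_subset {M : Type*} [AddZeroClass M] {G : M → M} {s : Set M}
    (hbij : Bijective (id + G)) (hGs : support G ⊆ s) : (id + G) '' s = s := by
  have eqOn_id : EqOn (id + G) id sᶜ := fun x hx => by
    simp [notMem_support.1 fun h => hx (hGs h)]
  rw [← compl_inj_iff, ← image_compl_eq hbij, eqOn_id.image_eq, image_id]

variable {E : Type*} [NormedAddCommGroup E] [NormedSpace ℝ E]

lemma lipschitzWith_indicator_of_eqOn_zero_frontier {F : Type*} [NormedAddCommGroup F]
    {U : Set E} {g : E → F} {K : ℝ≥0} (hU : IsOpen U) (hg : LipschitzOnWith K g (closure U))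
    (hzero : EqOn g 0 (frontier U)) : LipschitzWith K (U.indicator g) := by
  have dist_le_of_mem_of_notMem {x y : E} (hx : x ∈ U) (hy : y ∉ U) :
      dist (U.indicator g x) (U.indicator g y) ≤ K * dist x y := by
    obtain ⟨z, ⟨hzU, hzseg⟩, hz⟩ : ∃ z ∈ closure U ∩ segment ℝ x y, z ∉ U := by
      by_contra! h
      have hsub := (convex_segment x y).isPreconnected.subset_of_closure_inter_subset hU
        ⟨x, left_mem_segment ℝ x y, hx⟩ h
      exact hy (hsub (right_mem_segment ℝ x y))
    have hgz : g z = 0 := hzero (hU.frontier_eq ▸ ⟨hzU, hz⟩)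
    calc dist (U.indicator g x) (U.indicator g y) = dist (g x) (g z) := by
          rw [indicator_of_mem hx, indicator_of_notMem hy, hgz]
      _ ≤ K * dist x z := hg.dist_le_mul x (subset_closure hx) z hzU
      _ ≤ K * dist x y := by
          gcongr
          linarith [dist_add_dist_of_mem_segment hzseg, dist_nonneg (x := z) (y := y)]
  refine LipschitzWith.of_dist_le_mul fun x y => ?_
  by_cases hx : x ∈ U <;> by_cases hy : y ∈ U
  · simpa only [indicator_of_mem hx, indicator_of_mem hy] using
      hg.dist_le_mul x (subset_closure hx) y (subset_closure hy)
  · exact dist_le_of_mem_of_notMem hx hy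
  · simpa only [dist_comm] using dist_le_of_mem_of_notMem hy hx
  · simp only [indicator_of_notMem hx, indicator_of_notMem hy, dist_self]
    positivity

lemma bijective_id_add_of_lipschitzWith_lt_one [CompleteSpace E] {G : E → E} {K : ℝ≥0}
    (hK : K < 1) (hG : LipschitzWith K G) : Bijective (id + G) := by
  rcases subsingleton_or_nontrivial E with hE | hE
  · exact ⟨injective_of_subsingleton _, surjective_to_subsingleton _⟩
  · have approx : ApproximatesLinearOn (id + G)
        (ContinuousLinearEquiv.refl ℝ E : E →L[ℝ] E) univ K := by
      rw [ApproximatesLinearOn.approximatesLinearOn_iff_lipschitzOnWith, lipschitzOnWith_univ]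
      convert hG
      ext x
      simp
    have hK' : Subsingleton E ∨ K < ‖((ContinuousLinearEquiv.refl ℝ E).symm : E →L[ℝ] E)‖₊⁻¹ := by
      right
      simpa using hK
    exact ⟨injOn_univ.1 (approx.injOn hK'), approx.surjective hK'⟩

end Perturbation

section JacobianIntegral

variable {E : Type*} [NormedAddCommGroup E] [NormedSpace ℝ E] [FiniteDimensional ℝ E]
  [MeasurableSpace E] [BorelSpace E] {μ : Measure E} [μ.IsAddHaarMeasure]
  {G : E → E} {K : ℝ≥0} {s : Set E}

lemma integrableOn_and_setIntegral_det_one_add_fderiv_of_lt_one (hs : MeasurableSet s)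
    (hμs : μ s ≠ ⊤) (hK : K < 1) (hG : LipschitzWith K G) (hGs : support G ⊆ s)
    (hd : ∀ x ∈ s, DifferentiableAt ℝ G x) :
    IntegrableOn (fun x => (1 + fderiv ℝ G x).det) s μ ∧
      ∫ x in s, (1 + fderiv ℝ G x).det ∂μ = μ.real s := by
  have hbij := bijective_id_add_of_lipschitzWith_lt_one hK hG
  have himage := image_id_add_eq_of_support_subset hbij hGs
  have hderiv : ∀ x ∈ s, HasFDerivWithinAt (id + G) (1 + fderiv ℝ G x) s x := fun x hx =>
    ((hasFDerivAt_id x).add (hd x hx).hasFDerivAt).hasFDerivWithinAt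
  have habs (x : E) : |(1 + fderiv ℝ G x).det| • (1 : ℝ) = (1 + fderiv ℝ G x).det := by
    rw [smul_eq_mul, mul_one, abs_of_pos]
    exact det_one_add_pos_of_norm_lt_one ((norm_fderiv_le_of_lipschitz ℝ hG).trans_lt hK)
  have hintegrable := integrableOn_image_iff_integrableOn_abs_det_fderiv_smul μ hs hderiv
    hbij.injective.injOn fun _ => (1 : ℝ)
  have hintegral := integral_image_eq_integral_abs_det_fderiv_smul μ hs hderiv
    hbij.injective.injOn fun _ => (1 : ℝ)
  simp only [himage, habs] at hintegrable hintegral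
  exact ⟨hintegrable.1 (integrableOn_const hμs), by simp [← hintegral]⟩

theorem setIntegral_det_one_add_fderiv_of_support_subset (hs : MeasurableSet s)
    (hμs : μ s ≠ ⊤) (hG : LipschitzWith K G) (hGs : support G ⊆ s)
    (hd : ∀ x ∈ s, DifferentiableAt ℝ G x) :
    ∫ x in s, (1 + fderiv ℝ G x).det ∂μ = μ.real s := by
  choose p hdeg hdet using fun x =>
    exists_polynomial_eval_eq_det_one_add_smul (fderiv ℝ G x : E →ₗ[ℝ] E)
  have heval (x : E) (t : ℝ) : (p x).eval t = (1 + t • fderiv ℝ G x).det := hdet x t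
  obtain ⟨T, hT, hcard⟩ := (Ioo_infinite (show (0 : ℝ) < ((K : ℝ) + 1)⁻¹ by
    positivity)).exists_subset_card_eq (Module.finrank ℝ E + 1)
  have small : ∀ t ∈ T, IntegrableOn (fun x => (p x).eval t) s μ ∧
      ∫ x in s, (p x).eval t ∂μ = μ.real s := by
    intro t ht
    obtain ⟨ht0, htK⟩ := hT ht
    have hlt : ‖t‖₊ * K < 1 := by
      rw [← NNReal.coe_lt_coe, NNReal.coe_mul, coe_nnnorm, Real.norm_of_nonneg ht0.le]
      calc t * K < t * (K + 1) := by gcongr; linarith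
        _ < (K + 1 : ℝ)⁻¹ * (K + 1) := by gcongr
        _ = 1 := inv_mul_cancel₀ (by positivity)
    have hfderiv : ∀ x ∈ s, (1 + fderiv ℝ (t • G) x).det = (p x).eval t := fun x hx => by
      rw [heval, fderiv_const_smul (hd x hx)]
    obtain ⟨hint, heq⟩ := integrableOn_and_setIntegral_det_one_add_fderiv_of_lt_one hs hμs hlt
      ((lipschitzWith_smul t).comp hG) ((support_const_smul_subset t G).trans hGs)
      fun x hx => (hd x hx).const_smul t
    exact ⟨hint.congr_fun hfderiv hs, (setIntegral_congr_fun hs hfderiv).symm.trans heq⟩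
  simpa only [heval, one_smul] using integral_eval_eq_of_forall_mem_finset
    (Finset.card_pos.1 (by simp [hcard]))
    (fun x => Polynomial.degree_le_natDegree.trans_lt
      (by rw [hcard]; exact_mod_cast Nat.lt_succ_of_le (hdeg x)))
    (fun t ht => (small t ht).1) (fun t ht => (small t ht).2) 1

end JacobianIntegral

section FixedPoint

variable {E : Type*} [NormedAddCommGroup E] [InnerProductSpace ℝ E]

lemma inner_fderiv_apply_eq_zero_of_norm_eventually_eq {V : Type*}
    [NormedAddCommGroup V] [NormedSpace ℝ V] {r : V → E} {r' : V →L[ℝ] E} {x : V} {c : ℝ}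
    (hr : HasFDerivAt r r' x) (hnorm : ∀ᶠ y in 𝓝 x, ‖r y‖ = c) (v : V) :
    ⟪r x, r' v⟫ = 0 := by
  have hconst : HasFDerivAt (fun y => ‖r y‖ ^ 2) (0 : V →L[ℝ] ℝ) x :=
    (hasFDerivAt_const (c ^ 2) x).congr_of_eventuallyEq (hnorm.mono fun y hy => by simp [hy])
  simpa using congrArg (· v) (hr.norm_sq.unique hconst)

variable [FiniteDimensional ℝ E]

lemma det_fderiv_eq_zero_of_norm_eventually_eq {r : E → E} {r' : E →L[ℝ] E} {x : E} {c : ℝ}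
    (hr : HasFDerivAt r r' x) (hnorm : ∀ᶠ y in 𝓝 x, ‖r y‖ = c) (hx : r x ≠ 0) : r'.det = 0 := by
  by_contra hdet
  obtain ⟨v, hv⟩ := (LinearMap.equivOfDetNeZero (r' : E →ₗ[ℝ] E) hdet).surjective (r x)
  replace hv : r' v = r x := hv
  have := inner_fderiv_apply_eq_zero_of_norm_eventually_eq hr hnorm v
  rw [hv, inner_self_eq_zero] at this
  exact hx this

theorem exists_norm_ne_of_eqOn_id_sphere {r : E → E} {R : ℝ} (hR : 0 < R)
    (hr : ContDiffOn ℝ 1 r (closedBall 0 R)) (hid : EqOn r id (sphere 0 R)) :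
    ∃ x ∈ ball 0 R, ‖r x‖ ≠ R := by
  by_contra! hnorm
  borelize E
  let μ : Measure E := Measure.addHaar
  have hdr : ∀ x ∈ ball 0 R, DifferentiableAt ℝ r x := fun x hx =>
    (hr.differentiableOn one_ne_zero).differentiableAt
      (Filter.mem_of_superset (isOpen_ball.mem_nhds hx) ball_subset_closedBall)
  let G := (ball 0 R).indicator (r - id)
  obtain ⟨K, hK⟩ : ∃ K, LipschitzWith K G := by
    obtain ⟨K, hK⟩ := (hr.sub contDiffOn_id).exists_lipschitzOnWith one_ne_zero
      (convex_closedBall 0 R) (isCompact_closedBall 0 R)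
    refine ⟨K, lipschitzWith_indicator_of_eqOn_zero_frontier isOpen_ball ?_ fun x hx => ?_⟩
    · rwa [closure_ball _ hR.ne']
    · simp [hid (frontier_ball (0 : E) hR.ne' ▸ hx)]
  have hG : ∀ x ∈ ball 0 R, HasFDerivAt G (fderiv ℝ r x - 1) x := fun x hx =>
    ((hdr x hx).hasFDerivAt.sub (hasFDerivAt_id x)).congr_of_eventuallyEq
      (eqOn_indicator.eventuallyEq_of_mem (isOpen_ball.mem_nhds hx))
  have hdet : ∀ x ∈ ball 0 R, (1 + fderiv ℝ G x).det = 0 := fun x hx => by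
    rw [(hG x hx).fderiv, add_sub_cancel]
    exact det_fderiv_eq_zero_of_norm_eventually_eq (hdr x hx).hasFDerivAt
      (Filter.mem_of_superset (isOpen_ball.mem_nhds hx) hnorm)
      (norm_pos_iff.1 (hR.trans_eq (hnorm x hx).symm))
  have hvol : μ.real (ball 0 R) = 0 := calc
    μ.real (ball 0 R) = ∫ x in ball 0 R, (1 + fderiv ℝ G x).det ∂μ :=
      (setIntegral_det_one_add_fderiv_of_support_subset measurableSet_ball measure_ball_lt_top.ne
        hK support_indicator_subset fun x hx => (hG x hx).differentiableAt).symm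
    _ = 0 := setIntegral_eq_zero_of_forall_eq_zero hdet
  exact (ENNReal.toReal_pos (measure_ball_pos μ 0 hR).ne' measure_ball_lt_top.ne).ne' hvol

lemma exists_isFixedPt_of_contDiff_of_hasCompactSupport {g : E → E} (hg : ContDiff ℝ 1 g)
    (hsupp : HasCompactSupport g) : ∃ x, IsFixedPt g x := by
  by_contra! hfix
  have hne (x : E) : x - g x ≠ 0 := sub_ne_zero.2 (Ne.symm (hfix x))
  obtain ⟨R, hR, hball⟩ := hsupp.isBounded.subset_ball_lt 0 0
  have hcont : ContDiff ℝ 1 fun x => x - g x := contDiff_id.sub hg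
  let r : E → E := fun x => (R / ‖x - g x‖) • (x - g x)
  have hr : ContDiff ℝ 1 r :=
    (contDiff_const.div (hcont.norm ℝ hne) fun x => norm_ne_zero_iff.2 (hne x)).smul hcont
  have hid : EqOn r id (sphere 0 R) := fun x hx => by
    have hgx : g x = 0 := image_eq_zero_of_notMem_tsupport fun h =>
      (mem_ball_zero_iff.1 (hball h)).ne (mem_sphere_zero_iff_norm.1 hx)
    simp [r, hgx, mem_sphere_zero_iff_norm.1 hx, hR.ne']
  obtain ⟨x, -, hx⟩ := exists_norm_ne_of_eqOn_id_sphere hR hr.contDiffOn hid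
  refine hx ?_
  rw [norm_smul, norm_div, norm_norm, Real.norm_of_nonneg hR.le,
    div_mul_cancel₀ _ (norm_ne_zero_iff.2 (hne x))]

lemma exists_isFixedPt_of_hasCompactSupport {g : E → E} (hg : Continuous g)
    (hsupp : HasCompactSupport g) : ∃ x, IsFixedPt g x := by
  by_contra! hfix
  obtain ⟨ε, hε, hle⟩ : ∃ ε > 0, ∀ x, ε ≤ dist (g x) x := by
    have hcoercive : Filter.Tendsto (fun x => dist (g x) x) (Filter.cocompact E) Filter.atTop := by
      refine tendsto_norm_cocompact_atTop.congr' ?_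
      filter_upwards [hsupp.isCompact.compl_mem_cocompact] with x hx
      rw [image_eq_zero_of_notMem_tsupport hx, dist_zero_left]
    obtain ⟨x₀, hmin⟩ := (hg.dist continuous_id).exists_forall_le hcoercive
    exact ⟨_, dist_pos.2 (hfix x₀), hmin⟩
  obtain ⟨h, hh, happrox, hsub⟩ :=
    hg.exists_contDiff_approx 1 (continuous_const (y := ε)) fun _ => hε
  obtain ⟨x, hx⟩ := exists_isFixedPt_of_contDiff_of_hasCompactSupport hh (hsupp.mono hsub)
  have := happrox x
  rw [hx.eq, dist_comm] at this
  exact (hle x).not_gt this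

theorem exists_isFixedPt_of_isBounded_range {T : E → E} (hT : Continuous T)
    (hbdd : Bornology.IsBounded (range T)) : ∃ x, IsFixedPt T x := by
  obtain ⟨R, hR, hle⟩ := hbdd.exists_pos_norm_le
  let φ : ContDiffBump (0 : E) := ⟨R, R + 1, hR, lt_add_one R⟩
  obtain ⟨x, hx⟩ := exists_isFixedPt_of_hasCompactSupport (g := fun x => φ x • T x)
    (φ.continuous.smul hT) φ.hasCompactSupport.smul_right
  have hxR : ‖x‖ ≤ R := calc
    ‖x‖ = φ x * ‖T x‖ := by
      conv_lhs => rw [← hx.eq, norm_smul, Real.norm_of_nonneg φ.nonneg]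
    _ ≤ 1 * R := mul_le_mul φ.le_one (hle _ (mem_range_self x)) (norm_nonneg _) zero_le_one
    _ = R := one_mul R
  have hφ : φ x = 1 := φ.one_of_mem_closedBall (mem_closedBall_zero_iff.2 hxR)
  exact ⟨x, by simpa [IsFixedPt, hφ] using hx⟩

end FixedPoint

section Projection

variable {E : Type*} [NormedAddCommGroup E] [InnerProductSpace ℝ E] {X : Set E} {P : E → E}

/-- `P` is the metric projection onto the convex set `X`, encoded by the obtuse-angle
characterisation of the nearest point instead of by minimality of the distance. -/
structure IsMetricProjection (P : E → E) (X : Set E) : Prop where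
  mem (u : E) : P u ∈ X
  inner_nonpos (u : E) {w : E} (hw : w ∈ X) : ⟪u - P u, w - P u⟫ ≤ 0

lemma exists_isMetricProjection (hne : X.Nonempty) (hX : IsComplete X) (hconv : Convex ℝ X) :
    ∃ P, IsMetricProjection P X := by
  choose P hmem hmin using exists_norm_eq_iInf_of_complete_convex hne hX hconv
  exact ⟨P, hmem, fun u => (norm_eq_iInf_iff_real_inner_le_zero hconv (hmem u)).1 (hmin u) _⟩

namespace IsMetricProjection

lemma norm_sq_sub_le_inner (hP : IsMetricProjection P X) (u v : E) :
    ‖P u - P v‖ ^ 2 ≤ ⟪u - v, P u - P v⟫ := by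
  have hu := hP.inner_nonpos u (hP.mem v)
  have hv := hP.inner_nonpos v (hP.mem u)
  have expand : ⟪u - v, P u - P v⟫ - ‖P u - P v‖ ^ 2 =
      -⟪u - P u, P v - P u⟫ - ⟪v - P v, P u - P v⟫ := by
    rw [← real_inner_self_eq_norm_sq]
    simp only [inner_sub_left, inner_sub_right]
    ring
  linarith

lemma lipschitzWith_one (hP : IsMetricProjection P X) : LipschitzWith 1 P := by
  refine LipschitzWith.of_dist_le_mul fun u v => ?_
  rw [dist_eq_norm, dist_eq_norm, NNReal.coe_one, one_mul]
  have hle : ‖P u - P v‖ * ‖P u - P v‖ ≤ ‖u - v‖ * ‖P u - P v‖ := by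
    rw [← sq]
    exact (hP.norm_sq_sub_le_inner u v).trans (real_inner_le_norm _ _)
  rcases (norm_nonneg (P u - P v)).eq_or_lt with hzero | hpos
  · exact hzero ▸ norm_nonneg _
  · exact le_of_mul_le_mul_right hle hpos

end IsMetricProjection

end Projection

theorem vi_has_solution_general {E : Type*} [NormedAddCommGroup E] [InnerProductSpace ℝ E]
    [FiniteDimensional ℝ E] {X : Set E} (hcomp : IsCompact X) (hconv : Convex ℝ X)
    (hne : X.Nonempty) {F : E → E} (hF : ContinuousOn F X) :
    ∃ xstar ∈ X, ∀ x ∈ X, 0 ≤ ⟪F xstar, x - xstar⟫ := by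
  obtain ⟨P, hP⟩ := exists_isMetricProjection hne hcomp.isComplete hconv
  have hid_sub : ContinuousOn (fun x => x - F x) X := continuousOn_id.sub hF
  have hbdd : Bornology.IsBounded (range fun x => P x - F (P x)) :=
    (hcomp.image_of_continuousOn hid_sub).isBounded.subset <|
      range_subset_iff.2 fun x => ⟨P x, hP.mem x, rfl⟩
  obtain ⟨y, hy⟩ := exists_isFixedPt_of_isBounded_range
    (hid_sub.comp_continuous hP.lipschitzWith_one.continuous hP.mem) hbdd
  have hsub : y - P y = -F (P y) := by
    rw [sub_eq_iff_eq_add', ← sub_eq_add_neg]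
    exact hy.eq.symm
  refine ⟨P y, hP.mem y, fun x hx => ?_⟩
  have hangle := hP.inner_nonpos y hx
  rwa [hsub, inner_neg_left, neg_nonpos] at hangle

/-- Existence of a solution of VI(F, X) for `F` continuous on a compact convex body `X`. -/
theorem vi_has_solution {n : ℕ}
    (X : Set (EuclideanSpace ℝ (Fin n)))
    (hcomp : IsCompact X) (hconv : Convex ℝ X) (hint : (interior X).Nonempty)
    (F : EuclideanSpace ℝ (Fin n) → EuclideanSpace ℝ (Fin n))
    (hF : ContinuousOn F X) :
    ∃ xstar ∈ X, ∀ x ∈ X, ⟪F xstar, x - xstar⟫ ≥ 0 :=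
  vi_has_solution_general hcomp hconv (hint.mono interior_subset) hF
end

section
/- Let X ⊆ ℝⁿ be a nonempty compact set, let F : X → ℝⁿ be continuous, let {C_j} be a sequence of nonempty compact subsets of X with C_j ⊆ C_{j+1} for all j and the closure of ⋃_{j=1}^∞ C_j equal to X, and let x_j ∈ C_j satisfy max_{y ∈ C_j} F(x_j)ᵀ(x_j − y) < 1/2^j for each j. Then there exist a subsequence of {x_j} converging to a point x* ∈ X, and every such limit point x* is a solution of the variational inequality VI(F, X). -/
open scoped RealInnerProductSpace

/-!
A point `y` lying in `C j` for all large `j` satisfies `⟪F (x j), x j - y⟫ ≤ g_{C j}(x j)`, whose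
upper bound tends to `0`. Passing to the limit along the subsequence gives `⟪F x*, x* - y⟫ ≤ 0`.
Such `y` are dense in `X`, and for fixed `x*` the inequality is a closed condition on `y`.
-/

open Filter Topology Bornology

theorem iUnion_subset_setOf_eventually_mem {α ι κ : Type*} [Preorder ι] {l : Filter κ}
    {C : ι → Set α} (hC : Monotone C) {φ : κ → ι} (hφ : Tendsto φ l atTop) :
    ⋃ j, C j ⊆ {y | ∀ᶠ k in l, y ∈ C (φ k)} :=
  Set.iUnion_subset fun j _ hy => (hφ.eventually_ge_atTop j).mono fun _ hjk => hC hjk hy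

section VariationalInequality

variable {E : Type*} [SeminormedAddCommGroup E] [InnerProductSpace ℝ E] {F : E → E}

/-- The point `a` solves the variational inequality VI(F, X). Membership in `X` is part of the
notion, and `F` is a total function of which only the value at `a` matters. -/
def IsVISolution (F : E → E) (X : Set E) (a : E) : Prop :=
  a ∈ X ∧ ∀ y ∈ X, 0 ≤ ⟪F a, y - a⟫

/-- The gap function `g_S(x) = max_{y ∈ S} ⟪F x, x - y⟫`, which measures how far `x` is from solving
VI(F, S). It is encoded as a supremum, meaningful for nonempty bounded `S`; on the empty set it
is `0`. -/
noncomputable def gapFunction (F : E → E) (S : Set E) (x : E) : ℝ :=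
  sSup ((fun y => ⟪F x, x - y⟫) '' S)

theorem bddAbove_image_inner_sub {S : Set E} (hS : IsBounded S) (v x : E) :
    BddAbove ((fun y => ⟪v, x - y⟫) '' S) := by
  obtain ⟨r, hr⟩ := hS.exists_norm_le
  refine ⟨‖v‖ * (‖x‖ + r), ?_⟩
  rintro _ ⟨y, hy, rfl⟩
  calc ⟪v, x - y⟫ ≤ ‖v‖ * ‖x - y‖ := real_inner_le_norm v (x - y)
    _ ≤ ‖v‖ * (‖x‖ + ‖y‖) := by gcongr; exact norm_sub_le x y
    _ ≤ ‖v‖ * (‖x‖ + r) := by gcongr; exact hr y hy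

theorem inner_sub_le_gapFunction {S : Set E} (hS : IsBounded S) (x : E) {y : E} (hy : y ∈ S) :
    ⟪F x, x - y⟫ ≤ gapFunction F S x :=
  le_csSup (bddAbove_image_inner_sub hS (F x) x) (Set.mem_image_of_mem _ hy)

theorem inner_sub_nonneg_of_mem_closure {S : Set E} {v a y : E}
    (hS : ∀ z ∈ S, 0 ≤ ⟪v, z - a⟫) (hy : y ∈ closure S) : 0 ≤ ⟪v, y - a⟫ := by
  have hclosed : IsClosed {z : E | 0 ≤ ⟪v, z - a⟫} :=
    isClosed_le continuous_const (by fun_prop)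
  exact closure_minimal hS hclosed hy

section Limit

variable {ι : Type*} {l : Filter ι} [l.NeBot] {C : ι → Set E} {u : ι → E} {ε : ι → ℝ} {a : E}

theorem inner_sub_nonneg_of_tendsto_of_gapFunction_le
    (hu : Tendsto u l (𝓝 a)) (hFu : Tendsto (fun i => F (u i)) l (𝓝 (F a)))
    (hC : ∀ i, IsBounded (C i)) (hgap : ∀ i, gapFunction F (C i) (u i) ≤ ε i)
    (hε : Tendsto ε l (𝓝 0)) {y : E} (hy : ∀ᶠ i in l, y ∈ C i) : 0 ≤ ⟪F a, y - a⟫ := by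
  have hle : ⟪F a, a - y⟫ ≤ 0 := by
    refine le_of_tendsto_of_tendsto (hFu.inner (hu.sub_const y)) hε ?_
    filter_upwards [hy] with i hyi
    exact (inner_sub_le_gapFunction (hC i) (u i) hyi).trans (hgap i)
  rwa [← neg_sub, inner_neg_right, neg_nonneg]

theorem isVISolution_of_tendsto_of_gapFunction_le {X : Set E} (hF : ContinuousOn F X)
    (hC : ∀ i, IsBounded (C i)) (hdense : X ⊆ closure {y | ∀ᶠ i in l, y ∈ C i})
    (huX : ∀ i, u i ∈ X) (hgap : ∀ i, gapFunction F (C i) (u i) ≤ ε i) (hε : Tendsto ε l (𝓝 0))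
    (ha : a ∈ X) (hu : Tendsto u l (𝓝 a)) : IsVISolution F X a := by
  have hFu : Tendsto (fun i => F (u i)) l (𝓝 (F a)) :=
    (hF a ha).tendsto.comp (tendsto_nhdsWithin_iff.2 ⟨hu, .of_forall huX⟩)
  refine ⟨ha, fun y hy => inner_sub_nonneg_of_mem_closure (fun z hz => ?_) (hdense hy)⟩
  exact inner_sub_nonneg_of_tendsto_of_gapFunction_le hu hFu hC hgap hε hz

end Limit

theorem subsequence_limit_is_solution_general {X : Set E} (hX : IsCompact X)
    (hF : ContinuousOn F X) {C : ℕ → Set E} (hC : Monotone C) (hclos : closure (⋃ j, C j) = X)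
    {x : ℕ → E} (hx : ∀ j, x j ∈ X) {ε : ℕ → ℝ} (hε : Tendsto ε atTop (𝓝 0))
    (hgap : ∀ j, gapFunction F (C j) (x j) ≤ ε j) :
    (∃ φ : ℕ → ℕ, StrictMono φ ∧ ∃ a ∈ X, Tendsto (x ∘ φ) atTop (𝓝 a)) ∧
      ∀ (φ : ℕ → ℕ) (a : E), StrictMono φ → Tendsto (x ∘ φ) atTop (𝓝 a) →
        IsVISolution F X a := by
  refine ⟨?_, fun φ a hφ ha => ?_⟩
  · obtain ⟨a, haX, φ, hφ, ha⟩ := hX.tendsto_subseq hx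
    exact ⟨φ, hφ, a, haX, ha⟩
  have hXclosed : IsClosed X := hclos ▸ isClosed_closure
  have hCX (j : ℕ) : C j ⊆ X := (Set.subset_iUnion C j).trans (hclos ▸ subset_closure)
  have hdense : X ⊆ closure {y | ∀ᶠ k in atTop, y ∈ C (φ k)} :=
    hclos.symm.subset.trans
      (closure_mono (iUnion_subset_setOf_eventually_mem hC hφ.tendsto_atTop))
  exact isVISolution_of_tendsto_of_gapFunction_le hF
    (fun k => hX.isBounded.subset (hCX (φ k))) hdense (fun k => hx (φ k)) (fun k => hgap (φ k))
    (hε.comp hφ.tendsto_atTop) (hXclosed.mem_of_tendsto ha (.of_forall fun k => hx (φ k))) ha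

end VariationalInequality

/-- Iterates with vanishing gaps over an exhausting family of compact subsets have a
convergent subsequence, and every subsequential limit solves VI(F, X). -/
theorem subsequence_limit_is_solution {n : ℕ}
    (X : Set (EuclideanSpace ℝ (Fin n))) (hne : X.Nonempty) (hcomp : IsCompact X)
    (F : EuclideanSpace ℝ (Fin n) → EuclideanSpace ℝ (Fin n))
    (hF : ContinuousOn F X)
    (C : ℕ → Set (EuclideanSpace ℝ (Fin n)))
    (hCne : ∀ j, (C j).Nonempty) (hCcomp : ∀ j, IsCompact (C j))
    (hCX : ∀ j, C j ⊆ X) (hmono : ∀ j, C j ⊆ C (j + 1))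
    (hclos : closure (⋃ j, C j) = X)
    (x : ℕ → EuclideanSpace ℝ (Fin n)) (hx : ∀ j, x j ∈ C j)
    (hgap : ∀ j, sSup ((fun y => ⟪F (x j), x j - y⟫) '' C j) < 1 / 2 ^ j) :
    (∃ (φ : ℕ → ℕ), StrictMono φ ∧ ∃ xstar ∈ X,
        Filter.Tendsto (x ∘ φ) Filter.atTop (nhds xstar)) ∧
      ∀ (φ : ℕ → ℕ) (xstar : EuclideanSpace ℝ (Fin n)), StrictMono φ → xstar ∈ X →
        Filter.Tendsto (x ∘ φ) Filter.atTop (nhds xstar) →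
        ∀ y ∈ X, ⟪F xstar, y - xstar⟫ ≥ 0 := by
  have hε : Tendsto (fun j : ℕ => (1 : ℝ) / 2 ^ j) atTop (𝓝 0) :=
    tendsto_const_nhds.div_atTop (tendsto_pow_atTop_atTop_of_one_lt one_lt_two)
  exact (subsequence_limit_is_solution_general hcomp hF (monotone_nat_of_le_succ hmono) hclos
    (fun j => hCX j (hx j)) hε fun j => (hgap j).le).imp_right
    fun hsol φ xstar hφ _ hlim => (hsol φ xstar hφ hlim).2
end
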